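/- For all s ∈ ℝ, ⟨T(s), C′(s)⟩ = g(s)·τ(s)/f(s) and ‖C′(s)‖² = f(s)² + g(s)²; consequently the striction line of the C-ruled surface is α*(s) = α(s) − (g(s)·τ(s)/(f(s)·(f(s)² + g(s)²)))·C(s). -/

import Mathlib

open RealInnerProductSpace

/-- Cross product on `EuclideanSpace ℝ (Fin 3)`. -/
noncomputable def cross3 (u v : EuclideanSpace ℝ (Fin 3)) : EuclideanSpace ℝ (Fin 3) :=
  (EuclideanSpace.equiv (Fin 3) ℝ).symm
    (crossProduct ((EuclideanSpace.equiv (Fin 3) ℝ) u) ((EuclideanSpace.equiv (Fin 3) ℝ) v))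

/-- Determinant of the 3×3 matrix whose rows are the given vectors. -/
noncomputable def det3 (u v w : EuclideanSpace ℝ (Fin 3)) : ℝ :=
  Matrix.det (Matrix.of ![(EuclideanSpace.equiv (Fin 3) ℝ) u,
    (EuclideanSpace.equiv (Fin 3) ℝ) v, (EuclideanSpace.equiv (Fin 3) ℝ) w])

theorem cross3_apply_zero (u v : EuclideanSpace ℝ (Fin 3)) :
    cross3 u v 0 = u 1 * v 2 - u 2 * v 1 := by
  simp [cross3, cross_apply]

theorem cross3_apply_one (u v : EuclideanSpace ℝ (Fin 3)) :
    cross3 u v 1 = u 2 * v 0 - u 0 * v 2 := by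
  simp [cross3, cross_apply]

theorem cross3_apply_two (u v : EuclideanSpace ℝ (Fin 3)) :
    cross3 u v 2 = u 0 * v 1 - u 1 * v 0 := by
  simp [cross3, cross_apply]

theorem real_inner_eq_sum_three (u v : EuclideanSpace ℝ (Fin 3)) :
    ⟪u, v⟫ = u 0 * v 0 + u 1 * v 1 + u 2 * v 2 := by
  simp only [PiLp.inner_apply, RCLike.inner_apply, conj_trivial, Fin.sum_univ_three]
  ring

theorem inner_self_cross3_left (u v : EuclideanSpace ℝ (Fin 3)) : ⟪u, cross3 u v⟫ = 0 := by
  simp only [real_inner_eq_sum_three, cross3_apply_zero, cross3_apply_one, cross3_apply_two]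
  ring

theorem inner_self_cross3_right (u v : EuclideanSpace ℝ (Fin 3)) : ⟪v, cross3 u v⟫ = 0 := by
  simp only [real_inner_eq_sum_three, cross3_apply_zero, cross3_apply_one, cross3_apply_two]
  ring

theorem cross3_smul_self (c : ℝ) (u : EuclideanSpace ℝ (Fin 3)) : cross3 (c • u) u = 0 := by
  simp [cross3]

/-- The Lagrange identity. -/
theorem inner_cross3_self (u v : EuclideanSpace ℝ (Fin 3)) :
    ⟪cross3 u v, cross3 u v⟫ = ⟪u, u⟫ * ⟪v, v⟫ - ⟪u, v⟫ ^ 2 := by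
  simp only [real_inner_eq_sum_three, cross3_apply_zero, cross3_apply_one, cross3_apply_two]
  ring

/-- If `n` is a unit vector orthogonal to `t` and `x`, then `t × x` is a multiple of `n`. -/
theorem cross3_eq_smul_of_orthogonal {t n x : EuclideanSpace ℝ (Fin 3)}
    (hn : ⟪n, n⟫ = 1) (hnt : ⟪n, t⟫ = 0) (hnx : ⟪n, x⟫ = 0) :
    cross3 t x = (-⟪x, cross3 t n⟫) • n := by
  rw [real_inner_eq_sum_three] at hn hnt hnx
  ext i
  fin_cases i <;>
    simp only [Fin.zero_eta, Fin.mk_one, Fin.reduceFinMk, PiLp.smul_apply, smul_eq_mul,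
      real_inner_eq_sum_three, cross3_apply_zero, cross3_apply_one, cross3_apply_two]
  · linear_combination (-(t 1 * x 2 - t 2 * x 1)) * hn + (t 1 * n 2 - t 2 * n 1) * hnx
      - (x 1 * n 2 - x 2 * n 1) * hnt
  · linear_combination (-(t 2 * x 0 - t 0 * x 2)) * hn + (t 2 * n 0 - t 0 * n 2) * hnx
      - (x 2 * n 0 - x 0 * n 2) * hnt
  · linear_combination (-(t 0 * x 1 - t 1 * x 0)) * hn + (t 0 * n 1 - t 1 * n 0) * hnx
      - (x 0 * n 1 - x 1 * n 0) * hnt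

theorem hasDerivAt_euclidean {ι : Type*} [Fintype ι] {F : ℝ → EuclideanSpace ℝ ι}
    {F' : EuclideanSpace ℝ ι} {s : ℝ} :
    HasDerivAt F F' s ↔ ∀ i, HasDerivAt (fun x => F x i) (F' i) s := by
  refine ⟨fun h i => (EuclideanSpace.proj (𝕜 := ℝ) i).hasFDerivAt.comp_hasDerivAt s h, fun h => ?_⟩
  exact (EuclideanSpace.equiv ι ℝ).symm.hasFDerivAt.comp_hasDerivAt s (hasDerivAt_pi.2 h)

theorem HasDerivAt.cross3 {u v : ℝ → EuclideanSpace ℝ (Fin 3)} {u' v' : EuclideanSpace ℝ (Fin 3)}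
    {s : ℝ} (hu : HasDerivAt u u' s) (hv : HasDerivAt v v' s) :
    HasDerivAt (fun x => cross3 (u x) (v x)) (cross3 u' (v s) + cross3 (u s) v') s := by
  rw [hasDerivAt_euclidean] at hu hv ⊢
  intro i
  fin_cases i <;>
    simp only [Fin.zero_eta, Fin.mk_one, Fin.reduceFinMk, PiLp.add_apply,
      cross3_apply_zero, cross3_apply_one, cross3_apply_two]
  · exact (((hu 1).mul (hv 2)).sub ((hu 2).mul (hv 1))).congr_deriv (by ring)
  · exact (((hu 2).mul (hv 0)).sub ((hu 0).mul (hv 2))).congr_deriv (by ring)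
  · exact (((hu 0).mul (hv 1)).sub ((hu 1).mul (hv 0))).congr_deriv (by ring)

/-- A differentiable curve on the unit sphere is orthogonal to its velocity. -/
theorem inner_deriv_eq_zero_of_inner_self_eq_one {E : Type*} [NormedAddCommGroup E]
    [InnerProductSpace ℝ E] {u : ℝ → E} {u' : E} {s : ℝ} (hu : HasDerivAt u u' s)
    (h : ∀ x, ⟪u x, u x⟫ = 1) : ⟪u s, u'⟫ = 0 := by
  have h1 := hu.inner ℝ hu
  simp only [h] at h1
  have h2 := h1.unique (hasDerivAt_const s (1 : ℝ))
  rw [real_inner_comm (u s) u'] at h2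
  linarith

theorem hasDerivAt_div_sqrt_sq_add_sq {a b : ℝ → ℝ} {a' b' s : ℝ} (ha : HasDerivAt a a' s)
    (hb : HasDerivAt b b' s) (h : 0 < a s ^ 2 + b s ^ 2) :
    HasDerivAt (fun x => (√(a x ^ 2 + b x ^ 2))⁻¹ * a x)
      (b s * (a' * b s - a s * b') / √(a s ^ 2 + b s ^ 2) ^ 3) s := by
  have hr : 0 < √(a s ^ 2 + b s ^ 2) := Real.sqrt_pos.2 h
  have hsq : √(a s ^ 2 + b s ^ 2) ^ 2 = a s ^ 2 + b s ^ 2 := Real.sq_sqrt h.le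
  refine (((((ha.pow 2).add (hb.pow 2)).sqrt h.ne').inv hr.ne').mul ha).congr_deriv ?_
  simp only [Pi.add_apply, Pi.pow_apply, Pi.inv_apply]
  set r := √(a s ^ 2 + b s ^ 2)
  field_simp
  linear_combination 2 * a' * hsq

theorem stmt_5
    (α : ℝ → EuclideanSpace ℝ (Fin 3))
    (hα : ContDiff ℝ (⊤ : ℕ∞) α)
    (hunit : ∀ s, ‖deriv α s‖ = 1)
    (T : ℝ → EuclideanSpace ℝ (Fin 3)) (hT : ∀ s, T s = deriv α s)
    (κ : ℝ → ℝ) (hκ : ∀ s, κ s = ‖deriv (deriv α) s‖) (hκpos : ∀ s, 0 < κ s)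
    (N : ℝ → EuclideanSpace ℝ (Fin 3)) (hN : ∀ s, N s = (κ s)⁻¹ • deriv (deriv α) s)
    (B : ℝ → EuclideanSpace ℝ (Fin 3)) (hB : ∀ s, B s = cross3 (T s) (N s))
    (τ : ℝ → ℝ) (hτ : ∀ s, τ s = ⟪deriv N s, B s⟫)
    (f : ℝ → ℝ) (hf : ∀ s, f s = Real.sqrt (κ s ^ 2 + τ s ^ 2))
    (g : ℝ → ℝ) (hg : ∀ s, g s = κ s ^ 2 / (κ s ^ 2 + τ s ^ 2) * deriv (fun u => τ u / κ u) s)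
    (C : ℝ → EuclideanSpace ℝ (Fin 3))
    (hC : ∀ s, C s = (Real.sqrt (κ s ^ 2 + τ s ^ 2))⁻¹ • ((-κ s) • T s + τ s • B s))
    (W : ℝ → EuclideanSpace ℝ (Fin 3))
    (hW : ∀ s, W s = (Real.sqrt (κ s ^ 2 + τ s ^ 2))⁻¹ • (τ s • T s + κ s • B s)) :
    ∀ s : ℝ,
      ⟪T s, deriv C s⟫ = g s * τ s / f s ∧
      ‖deriv C s‖ ^ 2 = f s ^ 2 + g s ^ 2 ∧
      α s - (⟪T s, deriv C s⟫ / ‖deriv C s‖ ^ 2) • C s =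
        α s - (g s * τ s / (f s * (f s ^ 2 + g s ^ 2))) • C s := by
  have hTα : T = deriv α := funext hT
  have hT1 : ∀ s, ⟪T s, T s⟫ = 1 := fun s => by
    rw [real_inner_self_eq_norm_sq, hT, hunit, one_pow]
  have hα1 : ContDiff ℝ (⊤ : ℕ∞) (deriv α) := (contDiff_infty_iff_deriv.1 hα).2
  have hα2 : ContDiff ℝ (⊤ : ℕ∞) (deriv (deriv α)) := (contDiff_infty_iff_deriv.1 hα1).2
  have hα2ne : ∀ s, deriv (deriv α) s ≠ 0 := fun s => norm_pos_iff.1 (hκ s ▸ hκpos s)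
  have hκsmooth : ContDiff ℝ (⊤ : ℕ∞) κ := by
    rw [funext hκ]
    exact hα2.norm ℝ hα2ne
  have hNsmooth : ContDiff ℝ (⊤ : ℕ∞) N := by
    rw [funext hN]
    exact (hκsmooth.inv fun s => (hκpos s).ne').smul hα2
  have hT' : ∀ s, HasDerivAt T (κ s • N s) s := fun s => by
    rw [hN, smul_inv_smul₀ (hκpos s).ne', hTα]
    exact (contDiff_infty_iff_deriv.1 hα1).1.differentiableAt.hasDerivAt
  have hN' : ∀ s, HasDerivAt N (deriv N s) s := fun s =>
    (contDiff_infty_iff_deriv.1 hNsmooth).1.differentiableAt.hasDerivAt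
  have hN1 : ∀ s, ⟪N s, N s⟫ = 1 := fun s => by
    rw [real_inner_self_eq_norm_sq, hN, norm_smul, norm_inv, Real.norm_of_nonneg (hκpos s).le,
      ← hκ, inv_mul_cancel₀ (hκpos s).ne', one_pow]
  have hTN : ∀ s, ⟪T s, N s⟫ = 0 := fun s => by
    have h := inner_deriv_eq_zero_of_inner_self_eq_one (hT' s) hT1
    rw [inner_smul_right] at h
    exact (mul_eq_zero.1 h).resolve_left (hκpos s).ne'
  have hB' : ∀ s, HasDerivAt B ((-τ s) • N s) s := fun s => by
    have h := (hT' s).cross3 (hN' s)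
    rw [cross3_smul_self, zero_add, ← funext hB, cross3_eq_smul_of_orthogonal (hN1 s)
      (by rw [real_inner_comm, hTN])
      (inner_deriv_eq_zero_of_inner_self_eq_one (hN' s) hN1), ← hB, ← hτ] at h
    exact h
  have hκ' : ∀ s, HasDerivAt κ (deriv κ s) s := fun s =>
    (contDiff_infty_iff_deriv.1 hκsmooth).1.differentiableAt.hasDerivAt
  have hτ' : ∀ s, HasDerivAt τ (deriv τ s) s := fun s => by
    refine DifferentiableAt.hasDerivAt ?_
    rw [funext hτ]
    have hN'smooth := (contDiff_infty_iff_deriv.1 hNsmooth).2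
    exact (contDiff_infty_iff_deriv.1 hN'smooth).1.differentiableAt.inner ℝ
      (hB' s).differentiableAt
  intro s
  have hpos : 0 < κ s ^ 2 + τ s ^ 2 := by have := hκpos s; positivity
  have hfpos : 0 < f s := by rw [hf]; exact Real.sqrt_pos.2 hpos
  have hfsq : f s ^ 2 = κ s ^ 2 + τ s ^ 2 := by rw [hf, Real.sq_sqrt hpos.le]
  have hgf : g s * f s ^ 2 = deriv τ s * κ s - τ s * deriv κ s := by
    have := (hκpos s).ne'
    have h : deriv (fun u => τ u / κ u) s = _ := ((hτ' s).div (hκ' s) this).deriv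
    rw [hg, h, hfsq]
    field_simp
  have ha : HasDerivAt (fun x => (√(κ x ^ 2 + τ x ^ 2))⁻¹ * κ x) (-(g s * τ s / f s)) s := by
    convert hasDerivAt_div_sqrt_sq_add_sq (hκ' s) (hτ' s) hpos using 1
    rw [← hf]
    field_simp
    linear_combination (-τ s) * hgf
  have hb : HasDerivAt (fun x => (√(κ x ^ 2 + τ x ^ 2))⁻¹ * τ x) (g s * κ s / f s) s := by
    have h := hasDerivAt_div_sqrt_sq_add_sq (hτ' s) (hκ' s) (by rwa [add_comm])
    simp only [add_comm (τ _ ^ 2)] at h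
    convert h using 1
    rw [← hf]
    field_simp
    linear_combination (κ s) * hgf
  have hC' : deriv C s = (g s * τ s / f s) • T s - f s • N s + (g s * κ s / f s) • B s := by
    have hCeq : C = fun x => (-((√(κ x ^ 2 + τ x ^ 2))⁻¹ * κ x)) • T x +
        ((√(κ x ^ 2 + τ x ^ 2))⁻¹ * τ x) • B x := by
      funext x
      rw [hC]
      module
    have hfinv : f s = (f s)⁻¹ * κ s * κ s + (f s)⁻¹ * τ s * τ s := by
      field_simp
      linear_combination hfsq
    rw [hCeq]
    refine (((ha.neg.smul (hT' s)).add (hb.smul (hB' s))).congr_deriv ?_).deriv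
    simp only [Pi.neg_apply, ← hf]
    linear_combination (norm := module) hfinv • N s
  have hTB : ⟪T s, B s⟫ = 0 := by rw [hB, inner_self_cross3_left]
  have hNB : ⟪N s, B s⟫ = 0 := by rw [hB, inner_self_cross3_right]
  have hBB : ⟪B s, B s⟫ = 1 := by rw [hB, inner_cross3_self, hT1, hN1, hTN]; norm_num
  have hinner : ⟪T s, deriv C s⟫ = g s * τ s / f s := by
    simp only [hC', inner_add_right, inner_sub_right, inner_smul_right, hT1, hTN, hTB]
    ring
  have hnorm : ‖deriv C s‖ ^ 2 = f s ^ 2 + g s ^ 2 := by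
    rw [← real_inner_self_eq_norm_sq, hC']
    simp only [inner_add_right, inner_sub_right, inner_smul_right, inner_add_left, inner_sub_left,
      real_inner_smul_left, hT1, hN1, hBB, hTN, hTB, hNB, real_inner_comm (T s) (N s),
      real_inner_comm (T s) (B s), real_inner_comm (N s) (B s)]
    field_simp
    linear_combination (-g s ^ 2) * hfsq
  exact ⟨hinner, hnorm, by rw [hinner, hnorm, div_div]⟩
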